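/- arXiv:1003.3907 — 3 statements merged into one kernel-verified Lean document; each statement's English description precedes it below -/
import Mathlib

section
/- For every real t > 0 and all α, β ≥ 0 with α + β ≥ 1 or α + β ≤ 1/2, the inequality (t^{1−α−β} + 1)² (t^{2α} − 1)(t^{2β} − 1) ≥ 16αβ(t − 1)² holds. -/
/-!
Write `t = exp (2 * x)` and `σ = α + β`. After division by `16 * exp (2 * x)` the claim reads
`4 α β sinh² x ≤ cosh² ((1 - σ) x) sinh (2 α x) sinh (2 β x)`, and by evenness in `x` we may take
`0 < x`. Put `a = α x`, `b = β x` and `v = a + b`. The claim is the product of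
`4 a b sinh² v ≤ v² sinh (2 a) sinh (2 b)` and `v² sinh² x ≤ x² cosh² (x - v) sinh² v`.
Both follow from the fact that the even function `sinh u / u` increases with `|u|`, because
`sinh (2 a) sinh (2 b) = sinh² (a + b) - sinh² (a - b)` and
`2 cosh (x - v) sinh v = sinh x + sinh (2 v - x)`. The condition on `σ` says that `2 v - x` does
not lie in `(0, x)`.
-/

open Real Set

lemma convexOn_sinh : ConvexOn ℝ (Ici 0) sinh := by
  refine MonotoneOn.convexOn_of_deriv (convex_Ici 0) continuous_sinh.continuousOn
    differentiable_sinh.differentiableOn ?_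
  rw [Real.deriv_sinh]
  exact cosh_strictMonoOn.monotoneOn.mono interior_subset

lemma mul_sinh_le_mul_sinh {a b : ℝ} (ha : 0 ≤ a) (hab : a ≤ b) : b * sinh a ≤ a * sinh b := by
  rcases ha.eq_or_lt with rfl | ha
  · simp
  have hb : 0 < b := ha.trans_le hab
  have slope_le : sinh a / a ≤ sinh b / b := by
    simpa using convexOn_sinh.secant_mono self_mem_Ici ha.le hb.le ha.ne' hb.ne' hab
  rw [div_le_div_iff₀ ha hb] at slope_le
  linarith

lemma abs_mul_sinh_le_abs_mul_sinh {a b : ℝ} (h : |a| ≤ |b|) : |b * sinh a| ≤ |a * sinh b| := by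
  simpa only [abs_mul, abs_sinh] using mul_sinh_le_mul_sinh (abs_nonneg a) h

lemma sinh_add_mul_sinh_sub (a b : ℝ) :
    sinh (a + b) * sinh (a - b) = sinh a ^ 2 - sinh b ^ 2 := by
  rw [sinh_add, sinh_sub]
  linear_combination sinh a ^ 2 * cosh_sq b - sinh b ^ 2 * cosh_sq a

lemma two_mul_cosh_mul_sinh (a b : ℝ) :
    2 * (cosh a * sinh b) = sinh (a + b) + sinh (b - a) := by
  rw [sinh_add, sinh_sub]
  ring

lemma four_mul_mul_sinh_add_sq_le {a b : ℝ} (hab : 0 ≤ a * b) :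
    4 * (a * b) * sinh (a + b) ^ 2 ≤ (a + b) ^ 2 * (sinh (2 * a) * sinh (2 * b)) := by
  have abs_sub_le : |a - b| ≤ |a + b| := sq_le_sq.1 (by linarith)
  have sq_le : ((a + b) * sinh (a - b)) ^ 2 ≤ ((a - b) * sinh (a + b)) ^ 2 :=
    sq_le_sq.2 (abs_mul_sinh_le_abs_mul_sinh abs_sub_le)
  have sinh_mul : sinh (2 * a) * sinh (2 * b) = sinh (a + b) ^ 2 - sinh (a - b) ^ 2 := by
    rw [← sinh_add_mul_sinh_sub]
    ring_nf
  rw [sinh_mul]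
  linarith

lemma abs_add_mul_sinh_le {x w : ℝ} (hx : 0 ≤ x) (hw : x ≤ w ∨ w ≤ 0) :
    |(x + w) * sinh x| ≤ |x * (sinh x + sinh w)| := by
  have hs : 0 ≤ sinh x := sinh_nonneg_iff.2 hx
  rcases hw with hxw | hw
  · have h := mul_sinh_le_mul_sinh hx hxw
    exact abs_le_abs_of_nonneg (mul_nonneg (by linarith) hs) (by linarith)
  rcases le_total (-w) x with hwx | hxw
  · have h := mul_sinh_le_mul_sinh (neg_nonneg.2 hw) hwx
    rw [sinh_neg] at h
    exact abs_le_abs_of_nonneg (mul_nonneg (by linarith) hs) (by linarith)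
  · have h := mul_sinh_le_mul_sinh hx hxw
    rw [sinh_neg] at h
    exact abs_le_abs_of_nonpos (mul_nonpos_of_nonpos_of_nonneg (by linarith) hs) (by linarith)

lemma mul_sinh_sq_le_mul_cosh_mul_sinh_sq {x v : ℝ} (hx : 0 ≤ x) (hv : x ≤ v ∨ 2 * v ≤ x) :
    (v * sinh x) ^ 2 ≤ (x * (cosh (x - v) * sinh v)) ^ 2 := by
  have hw : x ≤ 2 * v - x ∨ 2 * v - x ≤ 0 := hv.imp (fun _ ↦ by linarith) (fun _ ↦ by linarith)
  have h := sq_le_sq.2 (abs_add_mul_sinh_le hx hw)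
  have sum_eq : sinh x + sinh (2 * v - x) = 2 * (cosh (x - v) * sinh v) := by
    rw [two_mul_cosh_mul_sinh]
    ring_nf
  rw [sum_eq] at h
  linarith

lemma four_mul_mul_sinh_sq_le {a b x : ℝ} (hab : 0 ≤ a * b) (hx : 0 ≤ x)
    (h : x ≤ a + b ∨ 2 * (a + b) ≤ x) :
    4 * (a * b) * sinh x ^ 2 ≤
      x ^ 2 * (cosh (x - (a + b)) ^ 2 * (sinh (2 * a) * sinh (2 * b))) := by
  rcases eq_or_ne (a + b) 0 with hv | hv
  · obtain rfl : b = -a := by linarith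
    obtain rfl : a = 0 := by nlinarith
    simp
  refine le_of_mul_le_mul_left ?_ (sq_pos_iff.2 hv)
  calc (a + b) ^ 2 * (4 * (a * b) * sinh x ^ 2)
      = 4 * (a * b) * ((a + b) * sinh x) ^ 2 := by ring
    _ ≤ 4 * (a * b) * (x * (cosh (x - (a + b)) * sinh (a + b))) ^ 2 := by
        gcongr 4 * (a * b) * ?_
        exact mul_sinh_sq_le_mul_cosh_mul_sinh_sq hx h
    _ = x ^ 2 * cosh (x - (a + b)) ^ 2 * (4 * (a * b) * sinh (a + b) ^ 2) := by ring
    _ ≤ x ^ 2 * cosh (x - (a + b)) ^ 2 * ((a + b) ^ 2 * (sinh (2 * a) * sinh (2 * b))) := by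
        gcongr x ^ 2 * cosh (x - (a + b)) ^ 2 * ?_
        exact four_mul_mul_sinh_add_sq_le hab
    _ = _ := by ring

lemma four_mul_mul_sinh_sq_le_cosh_sq_mul {α β : ℝ} (hαβ : 0 ≤ α * β)
    (h : 1 ≤ α + β ∨ α + β ≤ 1 / 2) (x : ℝ) :
    4 * (α * β) * sinh x ^ 2 ≤
      cosh ((1 - α - β) * x) ^ 2 * (sinh (2 * (α * x)) * sinh (2 * (β * x))) := by
  wlog hx : 0 ≤ x generalizing x
  · simpa using this (-x) (by linarith)
  rcases hx.eq_or_lt with rfl | hx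
  · simp
  have hab : 0 ≤ α * x * (β * x) := by
    rw [mul_mul_mul_comm]
    positivity
  have hv : x ≤ α * x + β * x ∨ 2 * (α * x + β * x) ≤ x :=
    h.imp (fun h ↦ by nlinarith) (fun h ↦ by nlinarith)
  have key := four_mul_mul_sinh_sq_le hab hx.le hv
  rw [show x - (α * x + β * x) = (1 - α - β) * x by ring] at key
  refine le_of_mul_le_mul_left ?_ (pow_pos hx 2)
  linarith

lemma exp_two_mul_add_one (y : ℝ) : exp (2 * y) + 1 = 2 * exp y * cosh y := by
  rw [cosh_eq, two_mul, exp_add, exp_neg]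
  field_simp

lemma exp_two_mul_sub_one (y : ℝ) : exp (2 * y) - 1 = 2 * exp y * sinh y := by
  rw [sinh_eq, two_mul, exp_add, exp_neg]
  field_simp

theorem key_inequality_general (t α β : ℝ) (ht : 0 < t) (hαβ : 0 ≤ α * β)
    (hcond : 1 ≤ α + β ∨ α + β ≤ 1 / 2) :
    (t ^ (1 - α - β) + 1) ^ 2 * ((t ^ (2 * α) - 1) * (t ^ (2 * β) - 1)) ≥
      16 * α * β * (t - 1) ^ 2 := by
  obtain ⟨x, rfl⟩ : ∃ x, t = exp (2 * x) :=
    ⟨log t / 2, by rw [mul_div_cancel₀ _ two_ne_zero, exp_log ht]⟩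
  have exp_rpow (s : ℝ) : exp (2 * x) ^ s = exp (2 * (s * x)) := by
    rw [← exp_mul]
    ring_nf
  have exp_prod :
      exp ((1 - α - β) * x) ^ 2 * (exp (2 * α * x) * exp (2 * β * x)) = exp x ^ 2 := by
    simp only [sq, ← exp_add]
    ring_nf
  simp only [exp_rpow, exp_two_mul_add_one, exp_two_mul_sub_one, ge_iff_le]
  calc 16 * α * β * (2 * exp x * sinh x) ^ 2
      = 16 * exp x ^ 2 * (4 * (α * β) * sinh x ^ 2) := by ring
    _ ≤ 16 * exp x ^ 2 *
          (cosh ((1 - α - β) * x) ^ 2 * (sinh (2 * (α * x)) * sinh (2 * (β * x)))) := by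
        gcongr 16 * exp x ^ 2 * ?_
        exact four_mul_mul_sinh_sq_le_cosh_sq_mul hαβ hcond x
    _ = _ := by
        rw [← exp_prod]
        ring_nf

/-- Lemma 3.3: for `t > 0` and `α, β ≥ 0` with `α + β ≥ 1` or `α + β ≤ 1/2`,
`(t^{1−α−β} + 1)² (t^{2α} − 1)(t^{2β} − 1) ≥ 16αβ(t − 1)²`. -/
theorem key_inequality (t α β : ℝ) (ht : 0 < t) (hα : 0 ≤ α) (hβ : 0 ≤ β)
    (hcond : 1 ≤ α + β ∨ α + β ≤ 1/2) :
    (t ^ (1 - α - β) + 1) ^ 2 * ((t ^ (2 * α) - 1) * (t ^ (2 * β) - 1)) ≥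
      16 * α * β * (t - 1) ^ 2 :=
  key_inequality_general t α β ht (mul_nonneg hα hβ) hcond
end

section
/- Let λ, μ > 0 be real numbers and let α, β ≥ 0 satisfy α + β ≥ 1 or α + β ≤ 1/2. Then λ + μ + f_{α+β}(λ,μ) ≥ f_α(λ,μ) + f_β(λ,μ). -/
/-!
The difference of the two sides factors as
`(λ^α - μ^α) (λ^β - μ^β) (λ^(1 - α - β) + μ^(1 - α - β))`. When `α` and `β` have the same sign, the
powers `t^α` and `t^β` are both monotone or both antitone in `t > 0`, so the first two factors have
the same sign.
-/

/-- `f_α(x,y) = x^α y^{1−α} + x^{1−α} y^α`. -/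
noncomputable def fWYD (a x y : ℝ) : ℝ := x ^ a * y ^ (1 - a) + x ^ (1 - a) * y ^ a

lemma monovaryOn_rpow_rpow {a b : ℝ} (hab : 0 ≤ a * b) :
    MonovaryOn (fun x : ℝ ↦ x ^ a) (fun x : ℝ ↦ x ^ b) (Set.Ioi 0) := by
  rcases mul_nonneg_iff.mp hab with ⟨ha, hb⟩ | ⟨ha, hb⟩
  · exact ((Real.monotoneOn_rpow_Ici_of_exponent_nonneg ha).mono Set.Ioi_subset_Ici_self).monovaryOn
      ((Real.monotoneOn_rpow_Ici_of_exponent_nonneg hb).mono Set.Ioi_subset_Ici_self)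
  · exact (Real.antitoneOn_rpow_Ioi_of_exponent_nonpos ha).monovaryOn
      (Real.antitoneOn_rpow_Ioi_of_exponent_nonpos hb)

section Factorization

variable {x y : ℝ}

lemma rpow_sub_rpow_mul_rpow_sub_rpow_mul_rpow (hx : 0 < x) (hy : 0 < y) (a b : ℝ) :
    (x ^ a - y ^ a) * (x ^ b - y ^ b) * x ^ (1 - (a + b)) =
      x + x ^ (1 - (a + b)) * y ^ (a + b) - x ^ (1 - a) * y ^ a - x ^ (1 - b) * y ^ b := by
  have h_one : x ^ a * x ^ b * x ^ (1 - (a + b)) = x := by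
    rw [← Real.rpow_add hx, ← Real.rpow_add hx, add_sub_cancel, Real.rpow_one]
  have h_one_sub_a : x ^ b * x ^ (1 - (a + b)) = x ^ (1 - a) := by
    rw [← Real.rpow_add hx]; ring_nf
  have h_one_sub_b : x ^ a * x ^ (1 - (a + b)) = x ^ (1 - b) := by
    rw [← Real.rpow_add hx]; ring_nf
  rw [Real.rpow_add hy]
  linear_combination h_one - y ^ a * h_one_sub_a - y ^ b * h_one_sub_b

lemma add_add_fWYD_add_sub_eq_mul (hx : 0 < x) (hy : 0 < y) (a b : ℝ) :
    x + y + fWYD (a + b) x y - (fWYD a x y + fWYD b x y) =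
      (x ^ a - y ^ a) * (x ^ b - y ^ b) * (x ^ (1 - (a + b)) + y ^ (1 - (a + b))) := by
  unfold fWYD
  linear_combination -rpow_sub_rpow_mul_rpow_sub_rpow_mul_rpow hx hy a b -
    rpow_sub_rpow_mul_rpow_sub_rpow_mul_rpow hy hx a b

end Factorization

theorem f_sum_ineq_general {lam mu α β : ℝ} (hlam : 0 < lam) (hmu : 0 < mu) (hαβ : 0 ≤ α * β) :
    lam + mu + fWYD (α + β) lam mu ≥ fWYD α lam mu + fWYD β lam mu := by
  have hsign : 0 ≤ (lam ^ α - mu ^ α) * (lam ^ β - mu ^ β) :=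
    (monovaryOn_rpow_rpow hαβ).sub_mul_sub_nonneg hmu hlam
  rw [ge_iff_le, ← sub_nonneg, add_add_fWYD_add_sub_eq_mul hlam hmu]
  exact mul_nonneg hsign (by positivity)

/-- For `λ, μ > 0` and `α, β ≥ 0` with `α + β ≥ 1` or `α + β ≤ 1/2`,
`λ + μ + f_{α+β}(λ,μ) ≥ f_α(λ,μ) + f_β(λ,μ)`. -/
theorem f_sum_ineq (lam mu α β : ℝ) (hlam : 0 < lam) (hmu : 0 < mu)
    (hα : 0 ≤ α) (hβ : 0 ≤ β) (hcond : 1 ≤ α + β ∨ α + β ≤ 1/2) :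
    lam + mu + fWYD (α + β) lam mu ≥ fWYD α lam mu + fWYD β lam mu :=
  f_sum_ineq_general hlam hmu (mul_nonneg hα hβ)
end

section
/- Let ρ be an invertible density matrix on ℂⁿ, let H be an n×n Hermitian matrix, and let 0 ≤ α ≤ 1. Then I_{ρ,α}(H) ≤ I_ρ(H) ≤ J_ρ(H) ≤ J_{ρ,α}(H), where I_ρ = I_{ρ,1/2} and J_ρ = J_{ρ,1/2}. -/
open Matrix ComplexOrder

/-- Real power of a positive definite matrix via functional calculus
(eigendecomposition). -/
noncomputable def matRpow {n : ℕ} {ρ : Matrix (Fin n) (Fin n) ℂ} (hρ : ρ.PosDef) (s : ℝ) :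
    Matrix (Fin n) (Fin n) ℂ :=
  (hρ.1.eigenvectorUnitary : Matrix (Fin n) (Fin n) ℂ) *
    Matrix.diagonal (fun i => ((hρ.1.eigenvalues i ^ s : ℝ) : ℂ)) *
    (star (hρ.1.eigenvectorUnitary : Matrix (Fin n) (Fin n) ℂ))

/-- `H₀ = H - Tr[ρH]·I`. -/
noncomputable def H0 {n : ℕ} (ρ H : Matrix (Fin n) (Fin n) ℂ) : Matrix (Fin n) (Fin n) ℂ :=
  H - (Matrix.trace (ρ * H)) • (1 : Matrix (Fin n) (Fin n) ℂ)

/-- One-parameter Wigner–Yanase–Dyson skew information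
`I_{ρ,α}(H) = Tr[ρH₀²] − Tr[ρ^α H₀ ρ^{1−α} H₀]`. -/
noncomputable def wyd1I {n : ℕ} {ρ : Matrix (Fin n) (Fin n) ℂ} (hρ : ρ.PosDef) (α : ℝ)
    (H : Matrix (Fin n) (Fin n) ℂ) : ℝ :=
  (Matrix.trace (ρ * H0 ρ H * H0 ρ H)
    - Matrix.trace (matRpow hρ α * H0 ρ H * matRpow hρ (1-α) * H0 ρ H)).re

/-- `J_{ρ,α}(H) = Tr[ρH₀²] + Tr[ρ^α H₀ ρ^{1−α} H₀]`. -/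
noncomputable def wyd1J {n : ℕ} {ρ : Matrix (Fin n) (Fin n) ℂ} (hρ : ρ.PosDef) (α : ℝ)
    (H : Matrix (Fin n) (Fin n) ℂ) : ℝ :=
  (Matrix.trace (ρ * H0 ρ H * H0 ρ H)
    + Matrix.trace (matRpow hρ α * H0 ρ H * matRpow hρ (1-α) * H0 ρ H)).re

/-- The variance `V_ρ(H) = Tr[ρH₀²]`. -/
noncomputable def varRho {n : ℕ} (ρ H : Matrix (Fin n) (Fin n) ℂ) : ℝ :=
  (Matrix.trace (ρ * H0 ρ H * H0 ρ H)).re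

/-!
Only the cross term `Tr[ρ^α H₀ ρ^{1-α} H₀]` depends on `α`, so the chain says that this term is
nonnegative and minimal at `α = 1/2`. In an eigenbasis of `ρ`, with eigenvalues `λᵢ` and with
`K` the Hermitian matrix representing `H₀`, it equals `∑ᵢⱼ λᵢ^α λⱼ^{1-α} |Kᵢⱼ|²`. Since `|Kᵢⱼ|²` is
symmetric in `i, j`, the coefficients may be symmetrized, and the arithmetic–geometric mean
inequality gives `λᵢ^α λⱼ^{1-α} + λⱼ^α λᵢ^{1-α} ≥ 2 √(λᵢ λⱼ)`.
-/

lemma sum_sum_mul_le_sum_sum_mul_of_symm {ι R : Type*} [Fintype ι] [Semiring R] [LinearOrder R]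
    [IsStrictOrderedRing R] {w f g : ι → ι → R} (hw : ∀ i j, 0 ≤ w i j)
    (hw_symm : ∀ i j, w i j = w j i) (hfg : ∀ i j, f i j + f j i ≤ g i j + g j i) :
    ∑ i, ∑ j, f i j * w i j ≤ ∑ i, ∑ j, g i j * w i j := by
  have two_mul_sum (h : ι → ι → R) :
      2 * ∑ i, ∑ j, h i j * w i j = ∑ i, ∑ j, (h i j + h j i) * w i j := by
    have hswap : ∑ i, ∑ j, h i j * w i j = ∑ i, ∑ j, h j i * w i j := by
      rw [Finset.sum_comm]
      simp only [hw_symm]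
    simp only [add_mul, Finset.sum_add_distrib, ← hswap, two_mul]
  refine le_of_mul_le_mul_left ?_ (zero_lt_two (α := R))
  rw [two_mul_sum, two_mul_sum]
  exact Finset.sum_le_sum fun i _ => Finset.sum_le_sum fun j _ =>
    mul_le_mul_of_nonneg_right (hfg i j) (hw i j)

lemma two_mul_rpow_midpoint_mul_le {x y : ℝ} (hx : 0 < x) (hy : 0 < y) (a b : ℝ) :
    2 * (x ^ ((a + b) / 2) * y ^ ((a + b) / 2)) ≤ x ^ a * y ^ b + y ^ a * x ^ b := by
  have rpow_half_sq {z : ℝ} (hz : 0 < z) : (z ^ ((a + b) / 2)) ^ 2 = z ^ a * z ^ b := by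
    rw [← Real.rpow_mul_natCast hz.le, ← Real.rpow_add hz]
    norm_num
  refine two_mul_le_add_of_sq_le_mul (by positivity) (by positivity) (le_of_eq ?_)
  rw [mul_pow, rpow_half_sq hx, rpow_half_sq hy]
  ring

lemma trace_conjStarAlgAut {ι R : Type*} [Fintype ι] [DecidableEq ι] [CommSemiring R] [StarRing R]
    (u : unitary (Matrix ι ι R)) (X : Matrix ι ι R) :
    (Unitary.conjStarAlgAut R _ u X).trace = X.trace := by
  rw [Unitary.conjStarAlgAut_apply, trace_mul_cycle, Unitary.coe_star_mul_self, one_mul]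

lemma trace_diagonal_mul_mul_diagonal_mul {ι R : Type*} [Fintype ι] [DecidableEq ι]
    [CommSemiring R] (d e : ι → R) (K L : Matrix ι ι R) :
    (diagonal d * K * diagonal e * L).trace = ∑ i, ∑ j, d i * e j * (K i j * L j i) := by
  simp only [trace, diag_apply, mul_apply (N := L), mul_diagonal, diagonal_mul]
  exact Finset.sum_congr rfl fun i _ => Finset.sum_congr rfl fun j _ => by ring

section Eigenbasis

variable {𝕜 ι : Type*} [RCLike 𝕜] [Fintype ι] [DecidableEq ι] {A X : Matrix ι ι 𝕜}

/-- The matrix `U* X U` of `X` in the orthonormal eigenbasis of the Hermitian matrix `A` formed by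
the columns of `U = hA.eigenvectorUnitary`, packaged as a star-algebra automorphism. -/
noncomputable def inEigenbasis (hA : A.IsHermitian) : Matrix ι ι 𝕜 ≃⋆ₐ[𝕜] Matrix ι ι 𝕜 :=
  (Unitary.conjStarAlgAut 𝕜 _ hA.eigenvectorUnitary).symm

lemma trace_inEigenbasis (hA : A.IsHermitian) (X : Matrix ι ι 𝕜) :
    (inEigenbasis hA X).trace = X.trace := by
  rw [inEigenbasis, Unitary.conjStarAlgAut_symm, trace_conjStarAlgAut]

lemma inEigenbasis_cfc (hA : A.IsHermitian) (f : ℝ → ℝ) :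
    inEigenbasis hA (cfc f A) = diagonal fun i => (f (hA.eigenvalues i) : 𝕜) := by
  rw [hA.cfc_eq]
  exact StarAlgEquiv.symm_apply_apply _ _

lemma isHermitian_inEigenbasis (hA : A.IsHermitian) (hX : X.IsHermitian) :
    (inEigenbasis hA X).IsHermitian :=
  IsSelfAdjoint.map hX (inEigenbasis hA)

lemma norm_inEigenbasis_apply_comm (hA : A.IsHermitian) (hX : X.IsHermitian) (i j : ι) :
    ‖inEigenbasis hA X i j‖ = ‖inEigenbasis hA X j i‖ := by
  rw [← (isHermitian_inEigenbasis hA hX).apply i j, norm_star]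

lemma re_trace_cfc_mul_mul_cfc_mul (hA : A.IsHermitian) (hX : X.IsHermitian) (f g : ℝ → ℝ) :
    RCLike.re (cfc f A * X * cfc g A * X).trace =
      ∑ i, ∑ j, f (hA.eigenvalues i) * g (hA.eigenvalues j) * ‖inEigenbasis hA X i j‖ ^ 2 := by
  have apply_mul_apply (i j : ι) : inEigenbasis hA X i j * inEigenbasis hA X j i =
      ((‖inEigenbasis hA X i j‖ ^ 2 : ℝ) : 𝕜) := by
    rw [← (isHermitian_inEigenbasis hA hX).apply j i, RCLike.star_def, RCLike.mul_conj,
      RCLike.ofReal_pow]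
  rw [← trace_inEigenbasis hA]
  simp only [map_mul, inEigenbasis_cfc, trace_diagonal_mul_mul_diagonal_mul, apply_mul_apply]
  norm_cast

lemma re_trace_cfc_mul_mul_cfc_mul_nonneg (hA : A.IsHermitian) (hX : X.IsHermitian) {f g : ℝ → ℝ}
    (hf : ∀ x ∈ spectrum ℝ A, 0 ≤ f x) (hg : ∀ x ∈ spectrum ℝ A, 0 ≤ g x) :
    0 ≤ RCLike.re (cfc f A * X * cfc g A * X).trace := by
  rw [re_trace_cfc_mul_mul_cfc_mul hA hX]
  have hf' i := hf _ (hA.eigenvalues_mem_spectrum_real i)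
  have hg' i := hg _ (hA.eigenvalues_mem_spectrum_real i)
  exact Finset.sum_nonneg fun i _ => Finset.sum_nonneg fun j _ =>
    mul_nonneg (mul_nonneg (hf' i) (hg' j)) (sq_nonneg _)

lemma re_trace_cfc_mul_mul_cfc_mul_le (hA : A.IsHermitian) (hX : X.IsHermitian)
    {f₁ g₁ f₂ g₂ : ℝ → ℝ} (h : ∀ x ∈ spectrum ℝ A, ∀ y ∈ spectrum ℝ A,
      f₁ x * g₁ y + f₁ y * g₁ x ≤ f₂ x * g₂ y + f₂ y * g₂ x) :
    RCLike.re (cfc f₁ A * X * cfc g₁ A * X).trace ≤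
      RCLike.re (cfc f₂ A * X * cfc g₂ A * X).trace := by
  rw [re_trace_cfc_mul_mul_cfc_mul hA hX, re_trace_cfc_mul_mul_cfc_mul hA hX]
  refine sum_sum_mul_le_sum_sum_mul_of_symm (fun _ _ => sq_nonneg _)
    (fun i j => by rw [norm_inEigenbasis_apply_comm hA hX]) fun i j => ?_
  exact h _ (hA.eigenvalues_mem_spectrum_real i) _ (hA.eigenvalues_mem_spectrum_real j)

lemma pos_of_posDef_of_mem_spectrum (hA : A.PosDef) {x : ℝ} (hx : x ∈ spectrum ℝ A) : 0 < x := by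
  rw [hA.1.spectrum_real_eq_range_eigenvalues] at hx
  obtain ⟨i, rfl⟩ := hx
  exact hA.eigenvalues_pos i

end Eigenbasis

section SkewInformation

variable {n : ℕ} {ρ H X : Matrix (Fin n) (Fin n) ℂ}

lemma matRpow_eq_cfc (hρ : ρ.PosDef) (s : ℝ) : matRpow hρ s = cfc (fun x : ℝ => x ^ s) ρ := by
  rw [hρ.1.cfc_eq, IsHermitian.cfc, Unitary.conjStarAlgAut_apply]
  rfl

lemma re_trace_matRpow_mul_mul_nonneg (hρ : ρ.PosDef) (hX : X.IsHermitian) (a b : ℝ) :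
    0 ≤ (matRpow hρ a * X * matRpow hρ b * X).trace.re := by
  simp only [matRpow_eq_cfc]
  exact re_trace_cfc_mul_mul_cfc_mul_nonneg hρ.1 hX
    (fun _ hx => Real.rpow_nonneg (pos_of_posDef_of_mem_spectrum hρ hx).le a)
    (fun _ hx => Real.rpow_nonneg (pos_of_posDef_of_mem_spectrum hρ hx).le b)

lemma re_trace_matRpow_midpoint_mul_mul_le (hρ : ρ.PosDef) (hX : X.IsHermitian) (a b : ℝ) :
    (matRpow hρ ((a + b) / 2) * X * matRpow hρ ((a + b) / 2) * X).trace.re ≤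
      (matRpow hρ a * X * matRpow hρ b * X).trace.re := by
  simp only [matRpow_eq_cfc]
  refine re_trace_cfc_mul_mul_cfc_mul_le hρ.1 hX fun x hx y hy => ?_
  have hx₀ := pos_of_posDef_of_mem_spectrum hρ hx
  have hy₀ := pos_of_posDef_of_mem_spectrum hρ hy
  linarith [two_mul_rpow_midpoint_mul_le hx₀ hy₀ a b]

lemma re_trace_matRpow_half_mul_mul_le (hρ : ρ.PosDef) (hX : X.IsHermitian) (α : ℝ) :
    (matRpow hρ (1 / 2) * X * matRpow hρ (1 - 1 / 2) * X).trace.re ≤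
      (matRpow hρ α * X * matRpow hρ (1 - α) * X).trace.re := by
  have h := re_trace_matRpow_midpoint_mul_mul_le hρ hX α (1 - α)
  simpa only [sub_half, add_sub_cancel] using h

lemma isHermitian_H0 (hρ : ρ.IsHermitian) (hH : H.IsHermitian) : (H0 ρ H).IsHermitian := by
  have star_trace : star (ρ * H).trace = (ρ * H).trace := by
    rw [← trace_conjTranspose, conjTranspose_mul, hρ.eq, hH.eq, trace_mul_comm]
  exact hH.sub (isHermitian_one.smul star_trace)

theorem wyd1_chain_general (hρ : ρ.PosDef) (hH : H.IsHermitian) (α : ℝ) :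
    wyd1I hρ α H ≤ wyd1I hρ (1 / 2) H ∧ wyd1I hρ (1 / 2) H ≤ wyd1J hρ (1 / 2) H ∧
      wyd1J hρ (1 / 2) H ≤ wyd1J hρ α H := by
  have hH₀ : (H0 ρ H).IsHermitian := isHermitian_H0 hρ.1 hH
  have cross_nonneg := re_trace_matRpow_mul_mul_nonneg hρ hH₀ (1 / 2) (1 - 1 / 2)
  have cross_half_le := re_trace_matRpow_half_mul_mul_le hρ hH₀ α
  simp only [wyd1I, wyd1J, Complex.sub_re, Complex.add_re]
  refine ⟨?_, ?_, ?_⟩ <;> linarith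

end SkewInformation

/-- `I_{ρ,α}(H) ≤ I_ρ(H) ≤ J_ρ(H) ≤ J_{ρ,α}(H)`, where `I_ρ = I_{ρ,1/2}`, `J_ρ = J_{ρ,1/2}`. -/
theorem wyd1_chain {n : ℕ} (ρ H : Matrix (Fin n) (Fin n) ℂ) (hρ : ρ.PosDef)
    (hρtr : Matrix.trace ρ = 1) (hH : H.IsHermitian) (α : ℝ) (hα0 : 0 ≤ α) (hα1 : α ≤ 1) :
    wyd1I hρ α H ≤ wyd1I hρ (1/2) H ∧ wyd1I hρ (1/2) H ≤ wyd1J hρ (1/2) H ∧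
      wyd1J hρ (1/2) H ≤ wyd1J hρ α H :=
  wyd1_chain_general hρ hH α
end
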